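/- arXiv:1805.06218 — 3 statements merged into one kernel-verified Lean document; each statement's English description precedes it below -/
import Mathlib

section
/- Let A and B be positive definite complex matrices such that s·A ≤ B ≤ t·A for some scalars 0 < s ≤ t with s·t ≤ 1. Then (2√(st)/(√s+√t))·(A ∇ B) ≤ A ♯ B and A ♯ B ≤ ((√s+√t)/(2√(st)))·(A ! B). -/
open Matrix ComplexOrder

/-- Loewner order: `A ≤ B` iff `B - A` is positive semidefinite. -/
def LoewnerLE {n : Type} [Fintype n] (A B : Matrix n n ℂ) : Prop := (B - A).PosSemidef

/-- The positive square root of a (Hermitian) matrix, via the continuous functional calculus. -/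
noncomputable def msqrt {n : Type} [Fintype n] [DecidableEq n] (A : Matrix n n ℂ) :
    Matrix n n ℂ := cfc Real.sqrt A

/-- The arithmetic mean `A ∇ B = (A + B)/2`. -/
noncomputable def amean {n : Type} [Fintype n] [DecidableEq n] (A B : Matrix n n ℂ) :
    Matrix n n ℂ := (2 : ℝ)⁻¹ • (A + B)

/-- The harmonic mean `A ! B = ((A⁻¹ + B⁻¹)/2)⁻¹`. -/
noncomputable def hmean {n : Type} [Fintype n] [DecidableEq n] (A B : Matrix n n ℂ) :
    Matrix n n ℂ := ((2 : ℝ)⁻¹ • (A⁻¹ + B⁻¹))⁻¹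

/-- The geometric mean `A ♯ B = A^(1/2) (A^(-1/2) B A^(-1/2))^(1/2) A^(1/2)`. -/
noncomputable def gmean {n : Type} [Fintype n] [DecidableEq n] (A B : Matrix n n ℂ) :
    Matrix n n ℂ := msqrt A * msqrt ((msqrt A)⁻¹ * B * (msqrt A)⁻¹) * msqrt A

/-- `f : ℝ → ℝ` is operator monotone on `[0,∞)`: it is continuous and nonnegative on `[0,∞)`
and monotone on positive-semidefinite complex matrices of every finite size, with `f` applied
via the continuous functional calculus. -/
def OpMonotone (f : ℝ → ℝ) : Prop :=
  ContinuousOn f (Set.Ici 0) ∧ (∀ x : ℝ, 0 ≤ x → 0 ≤ f x) ∧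
    ∀ (k : Type) [Fintype k] [DecidableEq k] (X Y : Matrix k k ℂ),
      X.PosSemidef → LoewnerLE X Y → LoewnerLE (cfc f X) (cfc f Y)

/-- `g : ℝ → ℝ` is operator monotone decreasing on `(0,∞)`: it is continuous and nonnegative on
`(0,∞)` and antitone on positive-definite complex matrices of every finite size, with `g` applied
via the continuous functional calculus. -/
def OpAntitone (g : ℝ → ℝ) : Prop :=
  ContinuousOn g (Set.Ioi 0) ∧ (∀ x : ℝ, 0 < x → 0 ≤ g x) ∧
    ∀ (k : Type) [Fintype k] [DecidableEq k] (X Y : Matrix k k ℂ),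
      X.PosDef → Y.PosDef → LoewnerLE X Y → LoewnerLE (cfc g Y) (cfc g X)

/-!
All three means have the form `A^(1/2) f(C) A^(1/2)` with `C = A^(-1/2) B A^(-1/2)`: the
representing function `f x` is the corresponding scalar mean of `1` and `x`. The hypothesis
`s A ≤ B ≤ t A` says that the spectrum of `C` lies in `[s, t]`, so both inequalities reduce to
scalar ones on `[s, t]`. These in turn follow from `√(s t) ≤ 1` and `(√x - √s) (√t - √x) ≥ 0`,
that is `x + √(s t) ≤ √x (√s + √t)`.
-/

section ScalarMeans

variable {s t x : ℝ}

theorem sqrt_mul_mul_one_add_le (hs : 0 ≤ s) (h1 : s * t ≤ 1) (hx : x ∈ Set.Icc s t) :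
    √(s * t) * (1 + x) ≤ √x * (√s + √t) := by
  have hx0 : 0 ≤ x := hs.trans hx.1
  have hst : √(s * t) ≤ 1 := Real.sqrt_le_one.2 h1
  have hprod : 0 ≤ (√x - √s) * (√t - √x) :=
    mul_nonneg (sub_nonneg.2 (Real.sqrt_le_sqrt hx.1)) (sub_nonneg.2 (Real.sqrt_le_sqrt hx.2))
  calc √(s * t) * (1 + x) = √(s * t) + √(s * t) * x := by ring
    _ ≤ √(s * t) + x := by gcongr; exact mul_le_of_le_one_left hx0 hst
    _ = √s * √t + √x * √x := by rw [Real.sqrt_mul hs, Real.mul_self_sqrt hx0]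
    _ ≤ √x * (√s + √t) := by linarith

theorem mul_arith_mean_one_le_sqrt (hs : 0 < s) (h1 : s * t ≤ 1) (hx : x ∈ Set.Icc s t) :
    2 * √(s * t) / (√s + √t) * (2⁻¹ * (1 + x)) ≤ √x := by
  have hsum : 0 < √s + √t := by positivity
  calc 2 * √(s * t) / (√s + √t) * (2⁻¹ * (1 + x))
      = √(s * t) * (1 + x) / (√s + √t) := by ring
    _ ≤ √x := (div_le_iff₀ hsum).2 (sqrt_mul_mul_one_add_le hs.le h1 hx)

theorem sqrt_le_mul_harm_mean_one (hs : 0 < s) (h1 : s * t ≤ 1) (hx : x ∈ Set.Icc s t) :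
    √x ≤ (√s + √t) / (2 * √(s * t)) * (2⁻¹ * (1 + x⁻¹))⁻¹ := by
  have hx0 : 0 < x := hs.trans_le hx.1
  have ht : 0 < t := hx0.trans_le hx.2
  calc √x ≤ √x * (√x * (√s + √t)) / (√(s * t) * (1 + x)) := by
        rw [le_div_iff₀ (by positivity)]
        exact mul_le_mul_of_nonneg_left (sqrt_mul_mul_one_add_le hs.le h1 hx) x.sqrt_nonneg
    _ = x * (√s + √t) / (√(s * t) * (1 + x)) := by
        rw [← mul_assoc, Real.mul_self_sqrt hx0.le]
    _ = (√s + √t) / (2 * √(s * t)) * (2⁻¹ * (1 + x⁻¹))⁻¹ := by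
        field_simp
        ring

end ScalarMeans

section Perspective

open scoped MatrixOrder

variable {n : Type} [Fintype n] [DecidableEq n] {A B X Y : Matrix n n ℂ} {f g : ℝ → ℝ}

theorem continuousOn_real_spectrum (A : Matrix n n ℂ) (f : ℝ → ℝ) :
    ContinuousOn f (spectrum ℝ A) :=
  A.finite_real_spectrum.continuousOn f

theorem isSelfAdjoint_msqrt (A : Matrix n n ℂ) : IsSelfAdjoint (msqrt A) :=
  cfc_predicate Real.sqrt A

theorem isSelfAdjoint_inv_msqrt (A : Matrix n n ℂ) : IsSelfAdjoint (msqrt A)⁻¹ :=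
  Matrix.IsHermitian.inv (isSelfAdjoint_msqrt A)

theorem msqrt_eq_cfcSqrt (hA : A.PosSemidef) : msqrt A = CFC.sqrt A := by
  rw [CFC.sqrt_eq_real_sqrt A hA.nonneg, cfcₙ_eq_cfc, msqrt]

theorem msqrt_mul_self (hA : A.PosSemidef) : msqrt A * msqrt A = A := by
  rw [msqrt_eq_cfcSqrt hA, CFC.sqrt_mul_sqrt_self A hA.nonneg]

theorem inv_msqrt_mul_self (hA : A.PosSemidef) : (msqrt A)⁻¹ * (msqrt A)⁻¹ = A⁻¹ := by
  rw [← Matrix.mul_inv_rev, msqrt_mul_self hA]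

theorem isUnit_det_msqrt (hA : A.PosDef) : IsUnit (msqrt A).det := by
  rw [← Matrix.isUnit_iff_isUnit_det, msqrt_eq_cfcSqrt hA.posSemidef]
  exact (CFC.isUnit_sqrt_iff A hA.posSemidef.nonneg).2 hA.isUnit

/-- The matrix `A^(-1/2) B A^(-1/2)`: the image of `B` under the congruence that takes a positive
definite `A` to the identity. For singular `A` the matrix inverse is the junk value `0`. -/
noncomputable def relativeMatrix (A B : Matrix n n ℂ) : Matrix n n ℂ :=
  (msqrt A)⁻¹ * B * (msqrt A)⁻¹

theorem relativeMatrix_mono (h : X ≤ Y) : relativeMatrix A X ≤ relativeMatrix A Y :=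
  (isSelfAdjoint_inv_msqrt A).conjugate_le_conjugate h

theorem relativeMatrix_smul_self (hA : A.PosDef) (r : ℝ) :
    relativeMatrix A (r • A) = algebraMap ℝ _ r := by
  have hunit := isUnit_det_msqrt hA
  have hone : (msqrt A)⁻¹ * A * (msqrt A)⁻¹ = 1 := by
    nth_rw 2 [← msqrt_mul_self hA.posSemidef]
    rw [Matrix.nonsing_inv_mul_cancel_left _ _ hunit, Matrix.mul_nonsing_inv _ hunit]
  rw [relativeMatrix, Matrix.mul_smul, Matrix.smul_mul, hone, Algebra.algebraMap_eq_smul_one]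

theorem msqrt_mul_relativeMatrix_mul_msqrt (hA : A.PosDef) (B : Matrix n n ℂ) :
    msqrt A * relativeMatrix A B * msqrt A = B := by
  have hunit := isUnit_det_msqrt hA
  rw [relativeMatrix, mul_assoc, Matrix.nonsing_inv_mul_cancel_right _ _ hunit,
    Matrix.mul_nonsing_inv_cancel_left _ _ hunit]

theorem inv_msqrt_mul_inv_relativeMatrix_mul_inv_msqrt (hA : A.PosDef) (B : Matrix n n ℂ) :
    (msqrt A)⁻¹ * (relativeMatrix A B)⁻¹ * (msqrt A)⁻¹ = B⁻¹ := by
  rw [mul_assoc, ← Matrix.mul_inv_rev, ← Matrix.mul_inv_rev,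
    msqrt_mul_relativeMatrix_mul_msqrt hA]

theorem isSelfAdjoint_relativeMatrix (hB : B.IsHermitian) (A : Matrix n n ℂ) :
    IsSelfAdjoint (relativeMatrix A B) :=
  IsSelfAdjoint.conjugate_self hB (isSelfAdjoint_inv_msqrt A)

theorem posDef_relativeMatrix (hA : A.PosDef) (hB : B.PosDef) : (relativeMatrix A B).PosDef := by
  have hunit : IsUnit (msqrt A)⁻¹ :=
    Matrix.isUnit_nonsing_inv_iff.2 ((Matrix.isUnit_iff_isUnit_det _).2 (isUnit_det_msqrt hA))
  have h := (hunit.posDef_star_left_conjugate_iff (x := B)).2 hB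
  rwa [(isSelfAdjoint_inv_msqrt A).star_eq] at h

theorem spectrum_relativeMatrix_subset_Icc {s t : ℝ} (hA : A.PosDef) (hB : B.IsHermitian)
    (hsA : s • A ≤ B) (htA : B ≤ t • A) :
    spectrum ℝ (relativeMatrix A B) ⊆ Set.Icc s t := by
  have hC := isSelfAdjoint_relativeMatrix hB A
  have hlower := relativeMatrix_mono (A := A) hsA
  have hupper := relativeMatrix_mono (A := A) htA
  rw [relativeMatrix_smul_self hA] at hlower hupper
  exact fun x hx => ⟨(algebraMap_le_iff_le_spectrum hC).1 hlower x hx,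
    (le_algebraMap_iff_spectrum_le hC).1 hupper x hx⟩

/-- The operator perspective `A^(1/2) f(A^(-1/2) B A^(-1/2)) A^(1/2)` of `f`. For `f` operator
monotone with `f 1 = 1` this is the Kubo-Ando mean with representing function `f`, but no
condition is imposed on `f` here. -/
noncomputable def perspective (f : ℝ → ℝ) (A B : Matrix n n ℂ) : Matrix n n ℂ :=
  msqrt A * cfc f (relativeMatrix A B) * msqrt A

theorem perspective_mono (h : ∀ x ∈ spectrum ℝ (relativeMatrix A B), f x ≤ g x) :
    perspective f A B ≤ perspective g A B :=
  (isSelfAdjoint_msqrt A).conjugate_le_conjugate <|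
    cfc_mono h (continuousOn_real_spectrum _ f) (continuousOn_real_spectrum _ g)

theorem perspective_const_mul (c : ℝ) (f : ℝ → ℝ) (A B : Matrix n n ℂ) :
    perspective (fun x => c * f x) A B = c • perspective f A B := by
  rw [perspective, cfc_const_mul c f _ (continuousOn_real_spectrum _ f), Matrix.mul_smul,
    Matrix.smul_mul, perspective]

theorem gmean_eq_perspective (A B : Matrix n n ℂ) : gmean A B = perspective Real.sqrt A B :=
  rfl

theorem amean_eq_perspective (hA : A.PosDef) (hB : B.IsHermitian) :
    amean A B = perspective (fun x => 2⁻¹ * (1 + x)) A B := by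
  have hC := isSelfAdjoint_relativeMatrix hB A
  have hcfc : cfc (fun x : ℝ => 1 + x) (relativeMatrix A B) = 1 + relativeMatrix A B := by
    rw [cfc_const_add 1 (fun x : ℝ => x) _, cfc_id' ℝ _, map_one]
  rw [perspective_const_mul, perspective, hcfc, mul_add, add_mul, mul_one,
    msqrt_mul_self hA.posSemidef, msqrt_mul_relativeMatrix_mul_msqrt hA, amean]

theorem inv_conj_cfc_relativeMatrix (hA : A.PosDef) (hB : B.IsHermitian)
    (hf : ∀ x ∈ spectrum ℝ (relativeMatrix A B), f x ≠ 0) :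
    ((msqrt A)⁻¹ * cfc f (relativeMatrix A B) * (msqrt A)⁻¹)⁻¹ =
      perspective (fun x => (f x)⁻¹) A B := by
  rw [perspective, cfc_inv f _ hf (continuousOn_real_spectrum _ f)
    (isSelfAdjoint_relativeMatrix hB A), ← Matrix.nonsing_inv_eq_ringInverse, Matrix.mul_inv_rev,
    Matrix.mul_inv_rev, Matrix.nonsing_inv_nonsing_inv _ (isUnit_det_msqrt hA), mul_assoc]

theorem hmean_eq_perspective (hA : A.PosDef) (hB : B.PosDef) :
    hmean A B = perspective (fun x => (2⁻¹ * (1 + x⁻¹))⁻¹) A B := by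
  have hC := isSelfAdjoint_relativeMatrix hB.isHermitian A
  have hpos : ∀ x ∈ spectrum ℝ (relativeMatrix A B), 0 < x := fun x hx =>
    (posDef_relativeMatrix hA hB).isStrictlyPositive.spectrum_pos hx
  have hcont := continuousOn_real_spectrum (relativeMatrix A B)
  have hcfc : cfc (fun x : ℝ => 2⁻¹ * (1 + x⁻¹)) (relativeMatrix A B) =
      (2 : ℝ)⁻¹ • (1 + (relativeMatrix A B)⁻¹) := by
    rw [cfc_const_mul _ _ _ (hcont _), cfc_const_add _ _ _ (hcont _), map_one,
      cfc_inv (fun x : ℝ => x) _ fun x hx => (hpos x hx).ne', cfc_id' ℝ _,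
      ← Matrix.nonsing_inv_eq_ringInverse]
  rw [← inv_conj_cfc_relativeMatrix hA hB.isHermitian fun x hx => ?_]
  · rw [hmean, hcfc, Matrix.mul_smul, Matrix.smul_mul, mul_add, add_mul, mul_one,
      inv_msqrt_mul_self hA.posSemidef, inv_msqrt_mul_inv_relativeMatrix_mul_inv_msqrt hA]
  · have := hpos x hx
    positivity

end Perspective

theorem polya_szego_lemma_st_le_one {n : Type} [Fintype n] [DecidableEq n]
    (A B : Matrix n n ℂ) (hA : A.PosDef) (hB : B.PosDef)
    (s t : ℝ) (hs : 0 < s) (hst : s ≤ t) (h1 : s * t ≤ 1)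
    (hsA : LoewnerLE (s • A) B) (htA : LoewnerLE B (t • A)) :
    LoewnerLE ((2 * Real.sqrt (s * t) / (Real.sqrt s + Real.sqrt t)) • amean A B) (gmean A B) ∧
      LoewnerLE (gmean A B) (((Real.sqrt s + Real.sqrt t) / (2 * Real.sqrt (s * t))) • hmean A B) := by
  have hspec := spectrum_relativeMatrix_subset_Icc hA hB.isHermitian hsA htA
  rw [gmean_eq_perspective, amean_eq_perspective hA hB.isHermitian, hmean_eq_perspective hA hB,
    ← perspective_const_mul, ← perspective_const_mul]
  exact ⟨perspective_mono fun x hx => mul_arith_mean_one_le_sqrt hs h1 (hspec hx),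
    perspective_mono fun x hx => sqrt_le_mul_harm_mean_one hs h1 (hspec hx)⟩
end

section
/- Let Φ be a positive linear map from n×n to m×m complex matrices, let f : ℝ → ℝ be operator monotone on [0,∞), and let A, B be positive definite n×n complex matrices with s·A ≤ B ≤ t·A for some scalars 0 < s ≤ t with s·t ≤ 1. Then (Φ(f(A)) + Φ(f(B)))/2 ≤ ((√s+√t)/(2√(st)))²·Φ(f(A ! B)). -/
open Matrix ComplexOrder

/-!
If `V` is an isometry and `X ≥ 0`, then for every `δ > 0` the matrix `X` lies below some
`Z = (1 + δ) V (Vᴴ X V) Vᴴ + c (1 - V Vᴴ)`. As `Z V = (1 + δ) V (Vᴴ X V)`, monotonicity of `f`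
gives `Vᴴ f(X) V ≤ Vᴴ f(Z) V = f((1 + δ) Vᴴ X V)`, and `δ → 0` yields Hansen's inequality
`Vᴴ f(X) V ≤ f(Vᴴ X V)`. With `X` block diagonal this says that `f` is operator concave, whence
`f(K X) ≤ K f(X)` for `K ≥ 1`.

If `s A ≤ B` and `s B ≤ A`, then `A ∇ B ≤ (1 + s)² / (4 s) • A ! B`, because the difference is a
positive multiple of `(A - s B) (A + B)⁻¹ (B - s A)`, in which the two outer factors are positive
and add up to a multiple of `A + B`. When `s t ≤ 1`, the bound `B ≤ t A` implies `s B ≤ A`, and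
`(1 + s)² / (4 s)` is at most the stated constant `K`. Hence
`f(A) ∇ f(B) ≤ f(A ∇ B) ≤ f(K (A ! B)) ≤ K f(A ! B)`, and `Φ` preserves this.
-/

open Filter Topology
open scoped MatrixOrder

section FunctionalCalculus

variable {m n 𝕜 : Type*} [Fintype m] [DecidableEq m] [Fintype n] [DecidableEq n] [RCLike 𝕜]

theorem exists_polynomial_eval_eq_of_finite {F : Type*} [Field F] {S : Set F} (hS : S.Finite)
    (f : F → F) : ∃ p : Polynomial F, ∀ x ∈ S, p.eval x = f x := by
  classical
  exact ⟨Lagrange.interpolate hS.toFinset id f, fun x hx ↦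
    Lagrange.eval_interpolate_at_node f Function.injective_id.injOn (hS.mem_toFinset.2 hx)⟩

theorem aeval_mul_eq_mul_aeval {R S : Type*} [CommRing R] [CommRing S] [Algebra R S]
    {Z : Matrix m m S} {N : Matrix n n S} {V : Matrix m n S} (h : Z * V = V * N)
    (p : Polynomial R) : Polynomial.aeval Z p * V = V * Polynomial.aeval N p := by
  induction p using Polynomial.induction_on' with
  | add p q hp hq => simp only [map_add, Matrix.add_mul, Matrix.mul_add, hp, hq]
  | monomial d a =>
    have hpow : Z ^ d * V = V * N ^ d := by
      induction d with
      | zero => simp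
      | succ d ih => rw [pow_succ, Matrix.mul_assoc, h, ← Matrix.mul_assoc, ih, Matrix.mul_assoc,
          ← pow_succ]
    simp only [Polynomial.aeval_monomial, ← Algebra.smul_def, Matrix.smul_mul, Matrix.mul_smul,
      hpow]

theorem cfc_mul_eq_mul_cfc {Z : Matrix m m 𝕜} {N : Matrix n n 𝕜} {V : Matrix m n 𝕜}
    (hZ : Z.IsHermitian) (hN : N.IsHermitian) (h : Z * V = V * N) (f : ℝ → ℝ) :
    cfc f Z * V = V * cfc f N := by
  obtain ⟨p, hp⟩ :=
    exists_polynomial_eval_eq_of_finite (Z.finite_real_spectrum.union N.finite_real_spectrum) f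
  have hfZ : cfc f Z = Polynomial.aeval Z p := by
    rw [← cfc_polynomial p Z hZ]
    exact cfc_congr fun x hx ↦ (hp x (Or.inl hx)).symm
  have hfN : cfc f N = Polynomial.aeval N p := by
    rw [← cfc_polynomial p N hN]
    exact cfc_congr fun x hx ↦ (hp x (Or.inr hx)).symm
  rw [hfZ, hfN, aeval_mul_eq_mul_aeval h]

theorem cfc_fromBlocks_diagonal {X : Matrix m m 𝕜} {Y : Matrix n n 𝕜}
    (hX : X.IsHermitian) (hY : Y.IsHermitian) (f : ℝ → ℝ) :
    cfc f (fromBlocks X 0 0 Y) = fromBlocks (cfc f X) 0 0 (cfc f Y) := by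
  have hXY : (fromBlocks X 0 0 Y).IsHermitian := hX.fromBlocks (by simp) hY
  have hl := cfc_mul_eq_mul_cfc (V := fromRows 1 0) hXY hX
    (by simp [fromBlocks_mul_fromRows, fromRows_mul]) f
  have hr := cfc_mul_eq_mul_cfc (V := fromRows 0 1) hXY hY
    (by simp [fromBlocks_mul_fromRows, fromRows_mul]) f
  rw [← fromBlocks_toBlocks (cfc f (fromBlocks X 0 0 Y))] at hl hr ⊢
  simp only [fromBlocks_mul_fromRows, fromRows_mul, fromRows_ext_iff, Matrix.mul_one,
    Matrix.mul_zero, Matrix.one_mul, Matrix.zero_mul, add_zero, zero_add] at hl hr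
  rw [hl.1, hl.2, hr.1, hr.2]

theorem tendsto_cfc_of_forall_mem_spectrum {ι : Type*} {l : Filter ι} {F : ι → ℝ → ℝ} {f : ℝ → ℝ}
    (A : Matrix n n 𝕜) (h : ∀ x ∈ spectrum ℝ A, Tendsto (F · x) l (𝓝 (f x))) :
    Tendsto (fun i ↦ cfc (F i) A) l (𝓝 (cfc f A)) := by
  refine tendsto_cfc_fun (fun u hu ↦ ?_) (.of_forall fun i ↦ A.finite_real_spectrum.continuousOn _)
  exact (eventually_all_finite A.finite_real_spectrum).2 fun x hx ↦
    Uniform.tendsto_nhds_right.1 (h x hx) hu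

end FunctionalCalculus

section Hansen

theorem le_conj_add_conj_one_sub {R : Type*} [Ring R] [StarRing R] [PartialOrder R]
    [StarOrderedRing R] [Algebra ℝ R] [StarModule ℝ R] [PosSMulMono ℝ R] {x p : R} (hx : 0 ≤ x)
    (hp : IsSelfAdjoint p) {δ : ℝ} (hδ : 0 < δ) :
    x ≤ (1 + δ) • (p * x * p) + (1 + δ⁻¹) • ((1 - p) * x * (1 - p)) := by
  -- The right side minus `x` is `δ⁻¹ • q x q` with `q = δ p - (1 - p)`.
  have hq : IsSelfAdjoint (δ • p - (1 - p)) :=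
    ((IsSelfAdjoint.all δ).smul hp).sub ((IsSelfAdjoint.one R).sub hp)
  have h : 0 ≤ δ⁻¹ • ((δ • p - (1 - p)) * x * (δ • p - (1 - p))) :=
    smul_nonneg (inv_nonneg.2 hδ.le) (hq.conjugate_nonneg hx)
  rw [← sub_nonneg]
  convert h using 1
  simp only [mul_sub, sub_mul, smul_mul_assoc, mul_smul_comm, mul_one, one_mul]
  match_scalars <;> field_simp <;> ring

theorem fromBlocks_diagonal_nonneg {m n 𝕜 : Type*} [Finite m] [Finite n] [RCLike 𝕜]
    {X : Matrix m m 𝕜} {Y : Matrix n n 𝕜} (hX : 0 ≤ X) (hY : 0 ≤ Y) :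
    0 ≤ fromBlocks X 0 0 Y := by
  classical
  have := Fintype.ofFinite m
  have := Fintype.ofFinite n
  obtain ⟨x, rfl⟩ := CStarAlgebra.nonneg_iff_eq_star_mul_self.mp hX
  obtain ⟨y, rfl⟩ := CStarAlgebra.nonneg_iff_eq_star_mul_self.mp hY
  convert star_mul_self_nonneg (fromBlocks x 0 0 y)
  simp [star_eq_conjTranspose, fromBlocks_conjTranspose, fromBlocks_multiply]

theorem conjTranspose_mul_mul_le_conjTranspose_mul_mul {m n 𝕜 : Type*} [Fintype m] [Finite n]
    [RCLike 𝕜] {X Y : Matrix m m 𝕜} (h : X ≤ Y) (V : Matrix m n 𝕜) :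
    Vᴴ * X * V ≤ Vᴴ * Y * V := by
  rw [Matrix.le_iff] at h ⊢
  rw [← Matrix.sub_mul, ← Matrix.mul_sub]
  exact h.conjTranspose_mul_mul_same V

theorem exists_le_smul_conj_add_smul_one_sub_sq {m n 𝕜 : Type*} [Fintype m] [DecidableEq m]
    [Fintype n] [RCLike 𝕜] {X : Matrix m m 𝕜} (hX : 0 ≤ X) (V : Matrix m n 𝕜) {δ : ℝ} (hδ : 0 < δ) :
    ∃ c : ℝ, X ≤ (1 + δ) • (V * (Vᴴ * X * V) * Vᴴ) + c • ((1 - V * Vᴴ) * (1 - V * Vᴴ)) := by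
  have hP : IsSelfAdjoint (V * Vᴴ) := isHermitian_mul_conjTranspose_self V
  have hQ : IsSelfAdjoint (1 - V * Vᴴ) := (IsSelfAdjoint.one _).sub hP
  obtain ⟨b, hb⟩ := X.finite_real_spectrum.bddAbove
  have hXb : X ≤ b • 1 := by
    rw [← Algebra.algebraMap_eq_smul_one]
    exact le_algebraMap_of_spectrum_le hb (.of_nonneg hX)
  refine ⟨(1 + δ⁻¹) * b, (le_conj_add_conj_one_sub hX hP hδ).trans (add_le_add (le_of_eq ?_) ?_)⟩
  · simp only [Matrix.mul_assoc]
  · have hQXQ : (1 - V * Vᴴ) * X * (1 - V * Vᴴ) ≤ b • ((1 - V * Vᴴ) * (1 - V * Vᴴ)) := by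
      simpa using hQ.conjugate_le_conjugate hXb
    rw [mul_smul]
    exact smul_le_smul_of_nonneg_left hQXQ (by positivity)

namespace OpMonotone

variable {f : ℝ → ℝ} {k j : Type} [Fintype k] [DecidableEq k] [Fintype j] [DecidableEq j]

theorem cfc_le_cfc (hf : OpMonotone f) {X Y : Matrix k k ℂ} (hX : 0 ≤ X) (h : X ≤ Y) :
    cfc f X ≤ cfc f Y :=
  hf.2.2 k X Y hX.posSemidef h

theorem tendsto_cfc_one_add_smul (hf : OpMonotone f) {X : Matrix k k ℂ} (hX : 0 ≤ X) :
    Tendsto (fun δ : ℝ ↦ cfc f ((1 + δ) • X)) (𝓝[>] 0) (𝓝 (cfc f X)) := by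
  have hcomp (δ : ℝ) : cfc f ((1 + δ) • X) = cfc (fun x ↦ f ((1 + δ) • x)) X :=
    (cfc_comp_smul (1 + δ) f X ((X.finite_real_spectrum.image _).continuousOn f)
      (.of_nonneg hX)).symm
  simp only [hcomp]
  refine tendsto_cfc_of_forall_mem_spectrum X fun x hx ↦ ?_
  have hx0 : 0 ≤ x := spectrum_nonneg_of_nonneg hX hx
  refine (hf.1 x hx0).tendsto.comp (tendsto_nhdsWithin_iff.2 ⟨?_, ?_⟩)
  · have : Continuous fun δ : ℝ ↦ (1 + δ) • x := by fun_prop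
    exact (this.tendsto' 0 x (by simp)).mono_left nhdsWithin_le_nhds
  · filter_upwards [self_mem_nhdsWithin] with δ (hδ : 0 < δ)
    exact smul_nonneg (by positivity) hx0

theorem conj_cfc_le_cfc_one_add_smul (hf : OpMonotone f) {X : Matrix k k ℂ} (hX : 0 ≤ X)
    {V : Matrix k j ℂ} (hV : Vᴴ * V = 1) {δ : ℝ} (hδ : 0 < δ) :
    Vᴴ * cfc f X * V ≤ cfc f ((1 + δ) • (Vᴴ * X * V)) := by
  set N := (1 + δ) • (Vᴴ * X * V) with hN
  obtain ⟨c, hc⟩ := exists_le_smul_conj_add_smul_one_sub_sq hX V hδ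
  set Z := (1 + δ) • (V * (Vᴴ * X * V) * Vᴴ) + c • ((1 - V * Vᴴ) * (1 - V * Vᴴ)) with hZ
  have hNH : N.IsHermitian :=
    .smul (isHermitian_conjTranspose_mul_mul V hX.posSemidef.1) (.all _)
  have hZV : Z * V = V * N := by
    have hQV : (1 - V * Vᴴ) * V = 0 := by simp [Matrix.sub_mul, Matrix.mul_assoc, hV]
    simp only [hZ, hN, Matrix.add_mul, Matrix.smul_mul, Matrix.mul_smul, Matrix.mul_assoc, hV, hQV,
      Matrix.mul_one, Matrix.mul_zero, smul_zero, add_zero]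
  calc Vᴴ * cfc f X * V
      ≤ Vᴴ * cfc f Z * V :=
        conjTranspose_mul_mul_le_conjTranspose_mul_mul (hf.cfc_le_cfc hX hc) V
    _ = cfc f N := by
        rw [Matrix.mul_assoc, cfc_mul_eq_mul_cfc (hX.trans hc).posSemidef.1 hNH hZV,
          ← Matrix.mul_assoc, hV, Matrix.one_mul]

open scoped Matrix.Norms.L2Operator in
theorem conj_cfc_le_cfc_conj (hf : OpMonotone f) {X : Matrix k k ℂ} (hX : 0 ≤ X)
    {V : Matrix k j ℂ} (hV : Vᴴ * V = 1) : Vᴴ * cfc f X * V ≤ cfc f (Vᴴ * X * V) := by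
  refine ge_of_tendsto
    (hf.tendsto_cfc_one_add_smul (hX.posSemidef.conjTranspose_mul_mul_same V).nonneg) ?_
  filter_upwards [self_mem_nhdsWithin] with δ hδ
  exact hf.conj_cfc_le_cfc_one_add_smul hX hV hδ

theorem concaveOn_cfc (hf : OpMonotone f) :
    ConcaveOn ℝ (Set.Ici 0) (cfc f : Matrix k k ℂ → Matrix k k ℂ) := by
  refine ⟨convex_Ici 0, fun X (hX : 0 ≤ X) Y (hY : 0 ≤ Y) a b ha hb hab ↦ ?_⟩
  set V : Matrix (k ⊕ k) k ℂ := fromRows (√a • 1) (√b • 1) with hVdef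
  have hVH : Vᴴ = fromCols (√a • 1) (√b • 1) := by
    simp [hVdef, conjTranspose_fromRows_eq_fromCols_conjTranspose]
  have hconj (P Q : Matrix k k ℂ) : Vᴴ * fromBlocks P 0 0 Q * V = a • P + b • Q := by
    rw [hVH, hVdef, fromCols_mul_fromBlocks, fromCols_mul_fromRows]
    simp [smul_smul, Real.mul_self_sqrt ha, Real.mul_self_sqrt hb]
  have hV : Vᴴ * V = 1 := by
    simpa [← add_smul, hab] using hconj 1 1
  simpa only [cfc_fromBlocks_diagonal hX.posSemidef.1 hY.posSemidef.1, hconj] using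
    hf.conj_cfc_le_cfc_conj (fromBlocks_diagonal_nonneg hX hY) hV

theorem cfc_smul_le_smul_cfc (hf : OpMonotone f) {X : Matrix k k ℂ} (hX : 0 ≤ X) {c : ℝ}
    (hc : 1 ≤ c) : cfc f (c • X) ≤ c • cfc f X := by
  have hc0 : 0 < c := by positivity
  have hc1 : 0 ≤ 1 - c⁻¹ := sub_nonneg.2 (inv_le_one_of_one_le₀ hc)
  have hf0 : 0 ≤ cfc f (0 : Matrix k k ℂ) :=
    cfc_nonneg fun x hx ↦ hf.2.1 x (spectrum_nonneg_of_nonneg le_rfl hx)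
  rw [← inv_smul_le_iff_of_pos hc0]
  calc c⁻¹ • cfc f (c • X)
      ≤ c⁻¹ • cfc f (c • X) + (1 - c⁻¹) • cfc f 0 := le_add_of_nonneg_right (smul_nonneg hc1 hf0)
    _ ≤ cfc f (c⁻¹ • c • X + (1 - c⁻¹) • 0) :=
        hf.concaveOn_cfc.2 (smul_nonneg hc0.le hX) (Set.mem_Ici.2 le_rfl) (by positivity) hc1
          (by ring)
    _ = cfc f X := by rw [smul_zero, add_zero, inv_smul_smul₀ hc0.ne']

theorem amean_cfc_le_cfc_amean (hf : OpMonotone f) {X Y : Matrix k k ℂ} (hX : 0 ≤ X) (hY : 0 ≤ Y) :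
    amean (cfc f X) (cfc f Y) ≤ cfc f (amean X Y) := by
  simpa only [amean, smul_add] using
    hf.concaveOn_cfc.2 hX hY (by norm_num : (0 : ℝ) ≤ 2⁻¹) (by norm_num) (by norm_num)

end OpMonotone

end Hansen

section Means

variable {n : Type} [Fintype n] [DecidableEq n] {A B S E F : Matrix n n ℂ}

theorem mul_inv_mul_nonneg (hS : S.PosDef) (hE : 0 ≤ E) (hF : 0 ≤ F) {g : ℝ}
    (hEF : E + F = g • S) : 0 ≤ E * S⁻¹ * F := by
  -- Conjugated by `S ^ (-1/2)`, the factors `E` and `F` add up to a scalar, so they commute.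
  set R := CFC.sqrt S
  have hRR : R * R = S := CFC.sqrt_mul_sqrt_self S hS.posSemidef.nonneg
  have hRH : IsSelfAdjoint R := .of_nonneg (CFC.sqrt_nonneg S)
  have hRu : IsUnit R.det :=
    isUnit_of_mul_isUnit_left (by rw [← det_mul, hRR]; exact hS.det_pos.ne'.isUnit)
  have hRiH : IsSelfAdjoint R⁻¹ := IsHermitian.inv hRH
  have hRSR : R⁻¹ * S * R⁻¹ = 1 := by
    rw [← hRR, nonsing_inv_mul_cancel_left _ _ hRu, mul_nonsing_inv _ hRu]
  have hsum : R⁻¹ * F * R⁻¹ = g • 1 - R⁻¹ * E * R⁻¹ := by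
    rw [eq_sub_iff_add_eq', ← Matrix.add_mul, ← Matrix.mul_add, hEF, Matrix.mul_smul,
      Matrix.smul_mul, hRSR]
  have hcomm : Commute (R⁻¹ * E * R⁻¹) (R⁻¹ * F * R⁻¹) := by
    rw [hsum]
    exact ((Commute.one_right _).smul_right g).sub_right (.refl _)
  have hprod : R * (R⁻¹ * E * R⁻¹ * (R⁻¹ * F * R⁻¹)) * R = E * S⁻¹ * F := by
    simp only [← hRR, Matrix.mul_inv_rev, Matrix.mul_assoc, mul_nonsing_inv_cancel_left _ _ hRu,
      nonsing_inv_mul _ hRu, Matrix.mul_one]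
  rw [← hprod]
  exact hRH.conjugate_nonneg
    (hcomm.mul_nonneg (hRiH.conjugate_nonneg hE) (hRiH.conjugate_nonneg hF))

theorem hmean_comm (A B : Matrix n n ℂ) : hmean A B = hmean B A := by
  rw [hmean, hmean, add_comm]

theorem hmean_posDef (hA : A.PosDef) (hB : B.PosDef) : (hmean A B).PosDef :=
  ((hA.inv.add hB.inv).smul (by norm_num : (0 : ℝ) < 2⁻¹)).inv

theorem hmean_eq_smul_mul_inv_mul (hA : IsUnit A) (hB : IsUnit B) :
    hmean A B = (2 : ℝ) • (B * (A + B)⁻¹ * A) := by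
  rw [isUnit_iff_isUnit_det] at hA hB
  have hsmul : ((2 : ℝ)⁻¹ • (1 : Matrix n n ℂ))⁻¹ = (2 : ℝ) • 1 :=
    inv_eq_left_inv (by simp [smul_smul])
  rw [hmean, inv_add_inv (by simp only [isUnit_iff_isUnit_det, hA, hB]),
    ← Matrix.one_mul (A⁻¹ * _ * _), ← Matrix.smul_mul]
  simp only [Matrix.mul_inv_rev, hsmul, nonsing_inv_nonsing_inv _ hA,
    nonsing_inv_nonsing_inv _ hB, Matrix.mul_smul, Matrix.mul_one, Matrix.mul_assoc]

theorem sub_mul_add_inv_mul_sub (hA : A.PosDef) (hB : B.PosDef) (s : ℝ) :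
    (A - s • B) * (A + B)⁻¹ * (B - s • A) =
      ((1 + s) ^ 2 / 2) • hmean A B - s • (A + B) := by
  have hS : IsUnit (A + B).det := (hA.add hB).det_pos.ne'.isUnit
  have hBA : B * (A + B)⁻¹ * A = (2 : ℝ)⁻¹ • hmean A B := by
    rw [hmean_eq_smul_mul_inv_mul hA.isUnit hB.isUnit, smul_smul]
    norm_num
  have hAB : A * (A + B)⁻¹ * B = (2 : ℝ)⁻¹ • hmean A B := by
    rw [hmean_comm, hmean_eq_smul_mul_inv_mul hB.isUnit hA.isUnit, smul_smul, add_comm B]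
    norm_num
  have hAA : A * (A + B)⁻¹ * A = A - (2 : ℝ)⁻¹ • hmean A B := by
    rw [eq_sub_iff_add_eq, ← hAB, ← Matrix.mul_add, nonsing_inv_mul_cancel_right _ _ hS]
  have hBB : B * (A + B)⁻¹ * B = B - (2 : ℝ)⁻¹ • hmean A B := by
    rw [eq_sub_iff_add_eq', ← hBA, ← Matrix.mul_add, nonsing_inv_mul_cancel_right _ _ hS]
  simp only [Matrix.sub_mul, Matrix.mul_sub, Matrix.smul_mul, Matrix.mul_smul, hAB, hBA, hAA, hBB]
  module

theorem amean_le_smul_hmean (hA : A.PosDef) (hB : B.PosDef) {s : ℝ} (hs : 0 < s)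
    (hsA : s • A ≤ B) (hsB : s • B ≤ A) :
    amean A B ≤ ((1 + s) ^ 2 / (4 * s)) • hmean A B := by
  have h : 0 ≤ (A - s • B) * (A + B)⁻¹ * (B - s • A) :=
    mul_inv_mul_nonneg (hA.add hB) (sub_nonneg.2 hsB) (sub_nonneg.2 hsA) (g := 1 - s) (by module)
  rw [sub_mul_add_inv_mul_sub hA hB, sub_nonneg] at h
  calc amean A B = (2 * s)⁻¹ • s • (A + B) := by
        rw [amean, smul_smul]
        congr 1
        field_simp
    _ ≤ (2 * s)⁻¹ • ((1 + s) ^ 2 / 2) • hmean A B := smul_le_smul_of_nonneg_left h (by positivity)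
    _ = ((1 + s) ^ 2 / (4 * s)) • hmean A B := by
        rw [smul_smul]
        congr 1
        field_simp
        norm_num

end Means

section Constants

variable {s t : ℝ}

theorem one_le_one_add_sq_div_four_mul (hs : 0 < s) : 1 ≤ (1 + s) ^ 2 / (4 * s) := by
  rw [one_le_div (by positivity)]
  linarith [sq_nonneg (1 - s)]

theorem one_add_sq_div_four_mul_le_sqrt_add_sqrt_div_sq (hs : 0 < s) (ht : 0 < t)
    (hst : s * t ≤ 1) :
    (1 + s) ^ 2 / (4 * s) ≤ ((√s + √t) / (2 * √(s * t))) ^ 2 := by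
  have hsqrt : √s * √t ≤ 1 := by rw [← Real.sqrt_mul hs.le]; exact Real.sqrt_le_one.2 hst
  have hle : (1 + s) / (2 * √s) ≤ (√s + √t) / (2 * √(s * t)) := by
    rw [Real.sqrt_mul hs.le, div_le_div_iff₀ (by positivity) (by positivity)]
    calc (1 + s) * (2 * (√s * √t)) = (√t + √s * (√s * √t)) * (2 * √s) := by
          nth_rw 1 [← Real.mul_self_sqrt hs.le]
          ring
      _ ≤ (√t + √s * 1) * (2 * √s) := by gcongr
      _ = (√s + √t) * (2 * √s) := by ring
  calc (1 + s) ^ 2 / (4 * s) = ((1 + s) / (2 * √s)) ^ 2 := by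
        rw [div_pow, mul_pow, Real.sq_sqrt hs.le]
        norm_num
    _ ≤ ((√s + √t) / (2 * √(s * t))) ^ 2 := by gcongr

end Constants

theorem polya_szego_monotone_st_le_one {n m : Type} [Fintype n] [DecidableEq n] [Fintype m] [DecidableEq m]
    (Φ : Matrix n n ℂ →ₗ[ℂ] Matrix m m ℂ)
    (hΦ : ∀ X : Matrix n n ℂ, X.PosSemidef → (Φ X).PosSemidef)
    (f : ℝ → ℝ) (hf : OpMonotone f)
    (A B : Matrix n n ℂ) (hA : A.PosDef) (hB : B.PosDef)
    (s t : ℝ) (hs : 0 < s) (hst : s ≤ t) (h1 : s * t ≤ 1)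
    (hsA : LoewnerLE (s • A) B) (htA : LoewnerLE B (t • A)) :
    LoewnerLE ((2 : ℝ)⁻¹ • (Φ (cfc f A) + Φ (cfc f B)))
      ((((Real.sqrt s + Real.sqrt t) / (2 * Real.sqrt (s * t))) ^ 2) • Φ (cfc f (hmean A B))) := by
  set K := ((√s + √t) / (2 * √(s * t))) ^ 2
  have hA₀ : 0 ≤ A := hA.posSemidef.nonneg
  have hB₀ : 0 ≤ B := hB.posSemidef.nonneg
  have hH₀ : 0 ≤ hmean A B := (hmean_posDef hA hB).posSemidef.nonneg
  have hK : (1 + s) ^ 2 / (4 * s) ≤ K :=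
    one_add_sq_div_four_mul_le_sqrt_add_sqrt_div_sq hs (hs.trans_le hst) h1
  have hsB : s • B ≤ A := calc
    s • B ≤ s • t • A := smul_le_smul_of_nonneg_left htA hs.le
    _ = (s * t) • A := smul_smul s t A
    _ ≤ A := smul_le_of_le_one_left hA₀ h1
  have hmeans : amean A B ≤ K • hmean A B :=
    (amean_le_smul_hmean hA hB hs hsA hsB).trans (smul_le_smul_of_nonneg_right hK hH₀)
  have hcfc : amean (cfc f A) (cfc f B) ≤ K • cfc f (hmean A B) := calc
    amean (cfc f A) (cfc f B) ≤ cfc f (amean A B) := hf.amean_cfc_le_cfc_amean hA₀ hB₀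
    _ ≤ cfc f (K • hmean A B) :=
      hf.cfc_le_cfc (smul_nonneg (by norm_num) (add_nonneg hA₀ hB₀)) hmeans
    _ ≤ K • cfc f (hmean A B) :=
      hf.cfc_smul_le_smul_cfc hH₀ ((one_le_one_add_sq_div_four_mul hs).trans hK)
  simpa only [LoewnerLE, amean, map_sub, map_add, LinearMap.map_smul_of_tower] using hΦ _ hcfc
end

section
/- Let Φ be a positive linear map from n×n to m×m complex matrices, let g : ℝ → ℝ be operator monotone decreasing on (0,∞), and let A, B be positive definite n×n complex matrices with s·A ≤ B ≤ t·A for some scalars 0 < s ≤ t with s·t ≥ 1. Then Φ(g(A ! B)) ≤ ((√s+√t)/2)²·(Φ(g(A)) + Φ(g(B)))/2. -/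
open Matrix ComplexOrder

/-!
Testing operator antitonicity of a function `h` on a block matrix unitarily equivalent to
`diag(A, B)`, which is dominated by a block diagonal matrix with upper left corner
`r • (a • A + b • B)` for any `r > 1`, gives `h(r (a A + b B)) ≤ a h(A) + b h(B)`.

For an operator monotone decreasing `g` this is used twice. The function `x ↦ -g(x⁻¹)` is also
operator antitone, and its Jensen inequality at `P⁻¹` and a small multiple of `P⁻¹`, combined with
`g ≥ 0`, gives `g(P) ≤ K g(K P)` for `K ≥ 1`. This in turn removes the factor `r` from the Jensen
inequality of `g` itself in the limit `r → 1`, so `g` is operator convex.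

If `s A ≤ B ≤ t A` and `K` dominates `(1 + d)² / (4 d)` at `d = s, t`, hence on all of `[s, t]`,
simultaneous diagonalization gives `K⁻¹ (A ∇ B) ≤ A ! B`. Therefore
`g(A ! B) ≤ g(K⁻¹ (A ∇ B)) ≤ K g(A ∇ B) ≤ K (g(A) ∇ g(B))`, and `Φ` preserves the inequality.
-/

section PolyaSzego

open scoped MatrixOrder

section Intertwining

variable {𝕜 n p : Type*} [RCLike 𝕜] [Fintype n] [DecidableEq n] [Fintype p] [DecidableEq p]

lemma aeval_mul_eq_mul_aeval_s7 {A : Matrix n n 𝕜} {B : Matrix p p 𝕜} {S : Matrix n p 𝕜}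
    (h : A * S = S * B) (q : Polynomial ℝ) :
    Polynomial.aeval A q * S = S * Polynomial.aeval B q := by
  induction q using Polynomial.induction_on with
  | C r => simp [Algebra.algebraMap_eq_smul_one]
  | add q₁ q₂ h₁ h₂ => rw [map_add, map_add, Matrix.add_mul, Matrix.mul_add, h₁, h₂]
  | monomial k r ih =>
    rw [pow_succ, ← mul_assoc, map_mul _ _ Polynomial.X, map_mul _ _ Polynomial.X,
      Polynomial.aeval_X, Polynomial.aeval_X, Matrix.mul_assoc, h, ← Matrix.mul_assoc, ih,
      Matrix.mul_assoc]

lemma cfc_mul_eq_mul_cfc_s7 {A : Matrix n n 𝕜} {B : Matrix p p 𝕜} {S : Matrix n p 𝕜}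
    (hA : A.IsHermitian) (hB : B.IsHermitian) (h : A * S = S * B) (f : ℝ → ℝ) :
    cfc f A * S = S * cfc f B := by
  have hfin : (spectrum ℝ A ∪ spectrum ℝ B).Finite :=
    finite_real_spectrum.union finite_real_spectrum
  obtain ⟨q, hq⟩ : ∃ q : Polynomial ℝ, Set.EqOn f q.eval (spectrum ℝ A ∪ spectrum ℝ B) :=
    ⟨Lagrange.interpolate hfin.toFinset id f, fun x hx ↦
      (Lagrange.eval_interpolate_at_node (v := id) f Function.injective_id.injOn
        (hfin.mem_toFinset.2 hx)).symm⟩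
  rw [cfc_congr (hq.mono Set.subset_union_left), cfc_congr (hq.mono Set.subset_union_right),
    cfc_polynomial q A hA.isSelfAdjoint, cfc_polynomial q B hB.isSelfAdjoint,
    aeval_mul_eq_mul_aeval_s7 h]

lemma cfc_fromBlocks_zero {A : Matrix n n 𝕜} {B : Matrix p p 𝕜} (hA : A.IsHermitian)
    (hB : B.IsHermitian) (f : ℝ → ℝ) :
    cfc f (fromBlocks A 0 0 B) = fromBlocks (cfc f A) 0 0 (cfc f B) := by
  have hAB : (fromBlocks A 0 0 B).IsHermitian := hA.fromBlocks (by simp) hB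
  -- The two block columns of the identity intertwine the direct sum with its summands.
  have hl := cfc_mul_eq_mul_cfc_s7 (S := fromRows 1 0) hAB hA
    (by simp [fromBlocks_mul_fromRows, fromRows_mul]) f
  have hr := cfc_mul_eq_mul_cfc_s7 (S := fromRows 0 1) hAB hB
    (by simp [fromBlocks_mul_fromRows, fromRows_mul]) f
  rw [← fromBlocks_toBlocks (cfc f (fromBlocks A 0 0 B))] at hl hr ⊢
  simp only [fromBlocks_mul_fromRows, fromRows_mul, Matrix.mul_one, Matrix.mul_zero, add_zero,
    zero_add, Matrix.one_mul, Matrix.zero_mul, fromRows_ext_iff] at hl hr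
  rw [hl.1, hl.2, hr.1, hr.2]

end Intertwining

section Order

open scoped Matrix.Norms.L2Operator in
lemma le_smul_of_forall_lt {n : Type*} [Finite n] {X Y : Matrix n n ℂ} {r : ℝ}
    (h : ∀ l, r < l → X ≤ l • Y) : X ≤ r • Y := by
  classical
  have := Fintype.ofFinite n
  have hlim : Filter.Tendsto (fun l : ℝ ↦ l • Y) (nhdsWithin r (Set.Ioi r)) (nhds (r • Y)) :=
    ((continuous_id.smul continuous_const).tendsto r).mono_left nhdsWithin_le_nhds
  exact ge_of_tendsto hlim (eventually_nhdsWithin_of_forall h)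

lemma convex_setOf_posDef (n : Type*) : Convex ℝ {A : Matrix n n ℂ | A.PosDef} := by
  rw [convex_iff_forall_pos]
  exact fun A hA B hB a b ha hb _ ↦ (hA.smul ha).add (hB.smul hb)

variable {𝕜 n p : Type*} [RCLike 𝕜] [Finite n] [Finite p]

lemma posDef_fromBlocks_zero {A : Matrix n n 𝕜} {B : Matrix p p 𝕜} (hA : A.PosDef)
    (hB : B.PosDef) : (fromBlocks A 0 0 B).PosDef := by
  classical
  have := Fintype.ofFinite n
  have := Fintype.ofFinite p
  have := hA.isUnit.invertible
  have hAB : (fromBlocks A 0 0 B).PosSemidef := by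
    simpa using (PosDef.fromBlocks₁₁ 0 B hA).2 (by simpa using hB.posSemidef)
  rw [hAB.posDef_iff_det_ne_zero, det_fromBlocks_zero₁₂]
  exact mul_ne_zero hA.det_pos.ne' hB.det_pos.ne'

lemma fromBlocks_le_fromBlocks_zero {X : Matrix n n 𝕜} {Y : Matrix n p 𝕜} {Z : Matrix p n 𝕜}
    {W : Matrix p p 𝕜} (h : (fromBlocks X Y Z W).PosSemidef) {e : ℝ} (he : 0 < e) :
    fromBlocks X Y Z W ≤ fromBlocks ((1 + e) • X) 0 0 ((1 + e⁻¹) • W) := by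
  -- The difference of the two sides is the congruence of the left one by `diag(√e, -1/√e)`.
  classical
  have := Fintype.ofFinite n
  have := Fintype.ofFinite p
  have hc : √e * √e = e := Real.mul_self_sqrt he.le
  have hc0 : √e ≠ 0 := (Real.sqrt_pos.2 he).ne'
  have hconj := h.mul_mul_conjTranspose_same
    (fromBlocks (√e • 1) 0 0 (-(√e)⁻¹ • 1) : Matrix (n ⊕ p) (n ⊕ p) 𝕜)
  rw [le_iff]
  convert hconj using 1
  simp only [fromBlocks_conjTranspose, fromBlocks_multiply, sub_eq_add_neg, fromBlocks_neg,
    fromBlocks_add, conjTranspose_smul, conjTranspose_one, conjTranspose_zero, star_trivial,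
    Matrix.smul_mul, Matrix.mul_smul, Matrix.one_mul, Matrix.mul_one, Matrix.mul_zero,
    Matrix.zero_mul, add_zero, zero_add, smul_smul, mul_neg, neg_mul, neg_neg, hc, ← mul_inv,
    mul_inv_cancel₀ hc0, inv_mul_cancel₀ hc0]
  congr 1 <;> module

open scoped Matrix.Norms.L2Operator in
lemma nonsing_inv_le_nonsing_inv {n : Type*} [Fintype n] [DecidableEq n]
    {A B : Matrix n n ℂ} (hA : A.PosDef) (h : A ≤ B) : B⁻¹ ≤ A⁻¹ := by
  simp only [nonsing_inv_eq_ringInverse]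
  exact CStarAlgebra.ringInverse_le_ringInverse h hA.isStrictlyPositive

end Order

section LoewnerAntitone

/-- `h` reverses the Loewner order on positive definite matrices of every finite size: the order
clause of `OpAntitone`, without the continuity and sign conditions on `h`, so that the notion
also applies to functions such as `fun x ↦ -g x⁻¹`. -/
def LoewnerAntitone (h : ℝ → ℝ) : Prop :=
  ∀ (k : Type) [Fintype k] [DecidableEq k], AntitoneOn (cfc h) {X : Matrix k k ℂ | X.PosDef}

lemma OpAntitone.loewnerAntitone {g : ℝ → ℝ} (hg : OpAntitone g) : LoewnerAntitone g :=
  fun k _ _ _ hX _ hY h ↦ hg.2.2 k _ _ hX hY h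

lemma LoewnerAntitone.cfc_smul_toBlocks₁₁_le {n p : Type} [Fintype n] [DecidableEq n] [Fintype p]
    [DecidableEq p] {h : ℝ → ℝ} (hh : LoewnerAntitone h) {M : Matrix (n ⊕ p) (n ⊕ p) ℂ}
    (hM : M.PosDef) {r : ℝ} (hr : 1 < r) :
    cfc h (r • M.toBlocks₁₁) ≤ (cfc h M).toBlocks₁₁ := by
  obtain ⟨e, he, rfl⟩ : ∃ e : ℝ, 0 < e ∧ 1 + e = r := ⟨r - 1, by linarith, by ring⟩
  have hX : ((1 + e) • M.toBlocks₁₁).PosDef :=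
    (hM.submatrix Sum.inl_injective).smul (by positivity)
  have hW : ((1 + e⁻¹) • M.toBlocks₂₂).PosDef :=
    (hM.submatrix Sum.inr_injective).smul (by positivity)
  have hle : M ≤ fromBlocks ((1 + e) • M.toBlocks₁₁) 0 0 ((1 + e⁻¹) • M.toBlocks₂₂) := by
    have := hM.posSemidef
    rw [← fromBlocks_toBlocks M] at this
    simpa only [fromBlocks_toBlocks] using fromBlocks_le_fromBlocks_zero this he
  have hcfc := hh (n ⊕ p) hM (posDef_fromBlocks_zero hX hW) hle
  rw [cfc_fromBlocks_zero hX.isHermitian hW.isHermitian] at hcfc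
  exact hcfc.submatrix Sum.inl

/-- The Hermitian block matrix `[[c, d], [d, -c]]`, an involution when `c ^ 2 + d ^ 2 = 1`.
Conjugation by it turns a direct sum into a block matrix whose upper left corner is a
convex combination of the summands. -/
noncomputable def blockReflection (n : Type*) [DecidableEq n] (c d : ℝ) :
    Matrix (n ⊕ n) (n ⊕ n) ℂ :=
  fromBlocks (c • 1) (d • 1) (d • 1) (-c • 1)

variable {n : Type*} [DecidableEq n]

lemma conjTranspose_blockReflection (c d : ℝ) :
    (blockReflection n c d)ᴴ = blockReflection n c d := by
  simp [blockReflection, fromBlocks_conjTranspose, conjTranspose_smul]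

variable [Fintype n]

lemma blockReflection_mul_self {c d : ℝ} (h : c ^ 2 + d ^ 2 = 1) :
    blockReflection n c d * blockReflection n c d = 1 := by
  have h' : c * c + d * d = 1 := by linarith
  simp only [blockReflection, fromBlocks_multiply, smul_mul_smul_comm, mul_one, ← add_smul]
  simp [mul_comm, h', add_comm (d * d)]

lemma toBlocks₁₁_blockReflection_conj (c d : ℝ) (A B : Matrix n n ℂ) :
    (blockReflection n c d * fromBlocks A 0 0 B * blockReflection n c d).toBlocks₁₁ =
      c ^ 2 • A + d ^ 2 • B := by
  simp only [blockReflection, fromBlocks_multiply, toBlocks_fromBlocks₁₁, smul_mul_assoc,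
    mul_smul_comm, one_mul, mul_one, mul_zero, add_zero, zero_add, smul_smul, sq]

end LoewnerAntitone

section Jensen

variable {n : Type} [Fintype n] [DecidableEq n]

lemma LoewnerAntitone.cfc_smul_add_le {h : ℝ → ℝ} (hh : LoewnerAntitone h) {A B : Matrix n n ℂ}
    (hA : A.PosDef) (hB : B.PosDef) {a b : ℝ} (ha : 0 ≤ a) (hb : 0 ≤ b) (hab : a + b = 1)
    {r : ℝ} (hr : 1 < r) :
    cfc h (r • (a • A + b • B)) ≤ a • cfc h A + b • cfc h B := by
  set R := blockReflection n √a √b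
  set D := fromBlocks A 0 0 B
  have hR : R * R = 1 := blockReflection_mul_self (by rw [Real.sq_sqrt ha, Real.sq_sqrt hb, hab])
  have hD : D.PosDef := posDef_fromBlocks_zero hA hB
  have hM : (R * D * R).PosDef := by
    simpa only [star_eq_conjTranspose, R, conjTranspose_blockReflection] using
      (IsUnit.posDef_star_right_conjugate_iff (IsUnit.of_mul_eq_one _ hR)).2 hD
  have hcfc : cfc h (R * D * R) = R * fromBlocks (cfc h A) 0 0 (cfc h B) * R := by
    have hDM := cfc_mul_eq_mul_cfc_s7 (S := R) hM.isHermitian hD.isHermitian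
      (by rw [mul_assoc, hR, mul_one]) h
    rw [← cfc_fromBlocks_zero hA.isHermitian hB.isHermitian, ← hDM, mul_assoc _ R, hR,
      mul_one]
  have hcorner := hh.cfc_smul_toBlocks₁₁_le hM hr
  rwa [hcfc, toBlocks₁₁_blockReflection_conj, toBlocks₁₁_blockReflection_conj, Real.sq_sqrt ha,
    Real.sq_sqrt hb] at hcorner

lemma OpAntitone.cfc_nonneg {g : ℝ → ℝ} (hg : OpAntitone g) {A : Matrix n n ℂ}
    (hA : A.PosDef) : 0 ≤ cfc g A := by
  refine _root_.cfc_nonneg fun x hx ↦ hg.2.1 x ?_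
  rw [hA.isHermitian.spectrum_real_eq_range_eigenvalues] at hx
  obtain ⟨i, rfl⟩ := hx
  exact hA.eigenvalues_pos i

lemma cfc_neg_comp_inv (g : ℝ → ℝ) {A : Matrix n n ℂ} (hA : A.PosDef) :
    cfc (fun x ↦ -g x⁻¹) A = -cfc g A⁻¹ := by
  obtain ⟨u, rfl⟩ := hA.isUnit
  rw [cfc_neg, cfc_comp_inv g u (finite_real_spectrum.image _ |>.continuousOn _)
    hA.isHermitian.isSelfAdjoint, coe_units_inv]

lemma OpAntitone.loewnerAntitone_neg_comp_inv {g : ℝ → ℝ} (hg : OpAntitone g) :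
    LoewnerAntitone fun x ↦ -g x⁻¹ := by
  intro k _ _ X hX Y hY h
  rw [cfc_neg_comp_inv g hX, cfc_neg_comp_inv g hY]
  exact neg_le_neg (hg.loewnerAntitone k hY.inv hX.inv (nonsing_inv_le_nonsing_inv hX h))

lemma OpAntitone.smul_cfc_inv_add_le {g : ℝ → ℝ} (hg : OpAntitone g) {A B : Matrix n n ℂ}
    (hA : A.PosDef) (hB : B.PosDef) {a b : ℝ} (ha : 0 ≤ a) (hb : 0 ≤ b) (hab : a + b = 1)
    {r : ℝ} (hr : 1 < r) :
    a • cfc g A⁻¹ + b • cfc g B⁻¹ ≤ cfc g (r • (a • A + b • B))⁻¹ := by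
  have hAB : (r • (a • A + b • B)).PosDef :=
    (convex_setOf_posDef n hA hB ha hb hab).smul (by positivity)
  have hjensen := hg.loewnerAntitone_neg_comp_inv.cfc_smul_add_le hA hB ha hb hab hr
  rwa [cfc_neg_comp_inv g hAB, cfc_neg_comp_inv g hA, cfc_neg_comp_inv g hB, smul_neg, smul_neg,
    ← neg_add, neg_le_neg_iff] at hjensen

lemma OpAntitone.smul_cfc_le_cfc_smul {g : ℝ → ℝ} (hg : OpAntitone g) {P : Matrix n n ℂ}
    (hP : P.PosDef) {K l : ℝ} (hK : 1 ≤ K) (hl : 0 < l) (hKl : l < K⁻¹) :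
    l • cfc g P ≤ cfc g (K • P) := by
  have hK0 : 0 < K := by linarith
  have hK1 : K⁻¹ ≤ 1 := inv_le_one_of_one_le₀ hK
  have hPdet : IsUnit P.det := (isUnit_iff_isUnit_det P).1 hP.isUnit
  -- Jensen at `P⁻¹` and `w • P⁻¹` with `w` so small that the mean stays below `K⁻¹ • P⁻¹`; the
  -- contribution of `w • P⁻¹` is then discarded because it is nonnegative.
  obtain ⟨w, r, hw, hr, hwr⟩ : ∃ w r, 0 < w ∧ 1 < r ∧ r * (l + (1 - l) * w) = K⁻¹ := by
    have hsmall : 0 < l + (1 - l) * ((K⁻¹ - l) / 2) := by nlinarith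
    exact ⟨(K⁻¹ - l) / 2, K⁻¹ / (l + (1 - l) * ((K⁻¹ - l) / 2)), by linarith,
      (one_lt_div hsmall).2 (by nlinarith), div_mul_cancel₀ _ hsmall.ne'⟩
  have hmean : (r • (l • P⁻¹ + (1 - l) • w • P⁻¹))⁻¹ = K • P := by
    rw [smul_smul, ← add_smul, smul_smul, hwr]
    refine inv_eq_left_inv ?_
    rw [smul_mul_smul_comm, mul_inv_cancel₀ hK0.ne', mul_nonsing_inv P hPdet, one_smul]
  have hQ : (w • P⁻¹).PosDef := hP.inv.smul hw
  have hjensen := hg.smul_cfc_inv_add_le hP.inv hQ hl.le (by linarith : 0 ≤ 1 - l) (by ring) hr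
  rw [hmean, nonsing_inv_nonsing_inv P hPdet] at hjensen
  exact (le_add_of_nonneg_right
    (smul_nonneg (by linarith) (hg.cfc_nonneg hQ.inv))).trans hjensen

lemma OpAntitone.cfc_le_smul_cfc_smul {g : ℝ → ℝ} (hg : OpAntitone g) {P : Matrix n n ℂ}
    (hP : P.PosDef) {K : ℝ} (hK : 1 ≤ K) : cfc g P ≤ K • cfc g (K • P) := by
  refine le_smul_of_forall_lt fun L hL ↦ ?_
  have hL0 : 0 < L := by linarith
  have hle := hg.smul_cfc_le_cfc_smul hP hK (inv_pos.2 hL0) (inv_strictAnti₀ (by linarith) hL)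
  exact (inv_smul_le_iff_of_pos hL0).1 hle

lemma OpAntitone.convexOn_cfc {g : ℝ → ℝ} (hg : OpAntitone g) :
    ConvexOn ℝ {A : Matrix n n ℂ | A.PosDef} (cfc g) := by
  refine ⟨convex_setOf_posDef n, fun A hA B hB a b ha hb hab ↦ ?_⟩
  rw [← one_smul ℝ (a • cfc g A + b • cfc g B)]
  refine le_smul_of_forall_lt fun L hL ↦ ?_
  calc cfc g (a • A + b • B)
      ≤ L • cfc g (L • (a • A + b • B)) :=
        hg.cfc_le_smul_cfc_smul (convex_setOf_posDef n hA hB ha hb hab) hL.le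
    _ ≤ L • (a • cfc g A + b • cfc g B) := by
        have := hg.loewnerAntitone.cfc_smul_add_le hA hB ha hb hab hL
        gcongr

end Jensen

section HarmonicMean

lemma exists_eq_conj_diagonal {n : Type*} [Fintype n] [DecidableEq n]
    {A B : Matrix n n ℂ} (hA : A.PosDef) (hB : B.IsHermitian) :
    ∃ (T : Matrix n n ℂ) (d : n → ℝ), IsUnit T ∧ A = T * Tᴴ ∧
      B = T * diagonal (fun i ↦ (d i : ℂ)) * Tᴴ := by
  obtain ⟨S, hS, rfl⟩ := CStarAlgebra.isStrictlyPositive_iff_eq_mul_star_self.1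
    hA.isStrictlyPositive
  have hC : (S⁻¹ * B * S⁻¹ᴴ).IsHermitian := isHermitian_mul_mul_conjTranspose _ hB
  obtain ⟨U, d, hUU, hUdiag⟩ : ∃ (U : Matrix n n ℂ) (d : n → ℝ), U * Uᴴ = 1 ∧
      S⁻¹ * B * S⁻¹ᴴ = U * diagonal (fun i ↦ (d i : ℂ)) * Uᴴ :=
    ⟨hC.eigenvectorUnitary, hC.eigenvalues,
      Unitary.mul_star_self_of_mem hC.eigenvectorUnitary.2, hC.spectral_theorem⟩
  have hSS : S * S⁻¹ = 1 := mul_nonsing_inv S ((isUnit_iff_isUnit_det S).1 hS)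
  have hSS' : S⁻¹ᴴ * Sᴴ = 1 := by rw [← conjTranspose_mul, hSS, conjTranspose_one]
  refine ⟨S * U, d, hS.mul (IsUnit.of_mul_eq_one _ hUU), ?_, ?_⟩
  · calc S * Sᴴ = S * (U * Uᴴ) * Sᴴ := by rw [hUU, mul_one]
      _ = S * U * (S * U)ᴴ := by simp only [conjTranspose_mul, mul_assoc]
  · calc B = (S * S⁻¹) * B * (S⁻¹ᴴ * Sᴴ) := by rw [hSS, hSS', one_mul, mul_one]
      _ = S * (S⁻¹ * B * S⁻¹ᴴ) * Sᴴ := by simp only [mul_assoc]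
      _ = S * U * diagonal (fun i ↦ (d i : ℂ)) * (S * U)ᴴ := by
        simp only [hUdiag, conjTranspose_mul, mul_assoc]

lemma conj_le_conj_iff {𝕜 n : Type*} [RCLike 𝕜] [Fintype n] [DecidableEq n]
    {T X Y : Matrix n n 𝕜} (hT : IsUnit T) : T * X * Tᴴ ≤ T * Y * Tᴴ ↔ X ≤ Y := by
  rw [le_iff, le_iff, ← Matrix.sub_mul, ← Matrix.mul_sub]
  exact IsUnit.posSemidef_star_right_conjugate_iff hT

lemma diagonal_ofReal_le_iff {n : Type*} [DecidableEq n] {a b : n → ℝ} :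
    diagonal (fun i ↦ (a i : ℂ)) ≤ diagonal (fun i ↦ (b i : ℂ)) ↔ ∀ i, a i ≤ b i := by
  rw [le_iff, diagonal_sub, posSemidef_diagonal_iff]
  simp only [sub_nonneg, Complex.real_le_real]

variable {n : Type} [Fintype n] [DecidableEq n]

lemma hmean_conj {T : Matrix n n ℂ} (hT : IsUnit T) (A B : Matrix n n ℂ) :
    hmean (T * A * Tᴴ) (T * B * Tᴴ) = T * hmean A B * Tᴴ := by
  have hT' : IsUnit T.det := (isUnit_iff_isUnit_det T).1 hT
  have hTs : IsUnit Tᴴ.det := (isUnit_iff_isUnit_det Tᴴ).1 hT.star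
  have hinv : (2 : ℝ)⁻¹ • ((T * A * Tᴴ)⁻¹ + (T * B * Tᴴ)⁻¹) =
      Tᴴ⁻¹ * ((2 : ℝ)⁻¹ • (A⁻¹ + B⁻¹)) * T⁻¹ := by
    simp only [Matrix.mul_inv_rev, mul_add, add_mul, mul_smul_comm, smul_mul_assoc, mul_assoc,
      smul_add]
  rw [hmean, hinv, Matrix.mul_inv_rev, Matrix.mul_inv_rev, nonsing_inv_nonsing_inv T hT',
    nonsing_inv_nonsing_inv Tᴴ hTs, hmean, mul_assoc]

lemma amean_conj (T A B : Matrix n n ℂ) :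
    amean (T * A * Tᴴ) (T * B * Tᴴ) = T * amean A B * Tᴴ := by
  simp only [amean, ← mul_add, ← add_mul, mul_smul_comm, smul_mul_assoc]

lemma inv_diagonal_ofReal {d : n → ℝ} (hd : ∀ i, d i ≠ 0) :
    (diagonal fun i ↦ (d i : ℂ))⁻¹ = diagonal fun i ↦ (((d i)⁻¹ : ℝ) : ℂ) := by
  refine inv_eq_right_inv ?_
  rw [diagonal_mul_diagonal, ← diagonal_one]
  congr with i
  exact_mod_cast mul_inv_cancel₀ (hd i)

lemma amean_diagonal_ofReal (a b : n → ℝ) :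
    amean (diagonal fun i ↦ (a i : ℂ)) (diagonal fun i ↦ (b i : ℂ)) =
      diagonal fun i ↦ (((a i + b i) / 2 : ℝ) : ℂ) := by
  rw [amean, diagonal_add, ← diagonal_smul]
  congr with i
  simp only [Pi.smul_apply, Complex.real_smul]
  push_cast
  ring

lemma hmean_diagonal_ofReal {a b : n → ℝ} (ha : ∀ i, 0 < a i) (hb : ∀ i, 0 < b i) :
    hmean (diagonal fun i ↦ (a i : ℂ)) (diagonal fun i ↦ (b i : ℂ)) =
      diagonal fun i ↦ (((((a i)⁻¹ + (b i)⁻¹) / 2)⁻¹ : ℝ) : ℂ) := by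
  have hab (i : n) : ((a i)⁻¹ + (b i)⁻¹) / 2 ≠ 0 := by
    have := ha i
    have := hb i
    positivity
  rw [← inv_diagonal_ofReal hab, ← amean_diagonal_ofReal,
    ← inv_diagonal_ofReal fun i ↦ (ha i).ne', ← inv_diagonal_ofReal fun i ↦ (hb i).ne',
    hmean, amean]

lemma sq_one_add_le_of_mem_Icc {K s t d : ℝ} (hs : (1 + s) ^ 2 ≤ 4 * K * s)
    (ht : (1 + t) ^ 2 ≤ 4 * K * t) (hsd : s ≤ d) (hdt : d ≤ t) : (1 + d) ^ 2 ≤ 4 * K * d := by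
  rcases hsd.eq_or_lt with rfl | hsd
  · exact hs
  · nlinarith [mul_nonneg (sub_nonneg.2 hsd.le) (sub_nonneg.2 hdt)]

lemma inv_mul_one_add_div_two_le {K d : ℝ} (hd : 0 < d) (h : (1 + d) ^ 2 ≤ 4 * K * d) :
    K⁻¹ * ((1 + d) / 2) ≤ ((1⁻¹ + d⁻¹) / 2)⁻¹ := by
  have hK : 0 < K := by
    by_contra! hK
    nlinarith [mul_nonneg (neg_nonneg.2 hK) hd.le]
  have hharm : ((1⁻¹ + d⁻¹) / 2)⁻¹ = 2 * d / (1 + d) := by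
    field_simp
    ring
  rw [hharm, inv_mul_le_iff₀ hK, ← mul_div_assoc, div_le_div_iff₀ two_pos (by positivity)]
  linarith

lemma inv_smul_amean_le_hmean {A B : Matrix n n ℂ} (hA : A.PosDef) (hB : B.IsHermitian)
    {s t K : ℝ} (hs : 0 < s) (hsK : (1 + s) ^ 2 ≤ 4 * K * s) (htK : (1 + t) ^ 2 ≤ 4 * K * t)
    (hsA : s • A ≤ B) (htA : B ≤ t • A) : K⁻¹ • amean A B ≤ hmean A B := by
  obtain ⟨T, d, hT, hTA, rfl⟩ := exists_eq_conj_diagonal hA hB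
  obtain rfl : A = T * diagonal (fun _ ↦ ((1 : ℝ) : ℂ)) * Tᴴ := by simp [hTA]
  have hsmul (r : ℝ) (v : n → ℝ) : r • (T * diagonal (fun i ↦ (v i : ℂ)) * Tᴴ) =
      T * diagonal (fun i ↦ ((r * v i : ℝ) : ℂ)) * Tᴴ := by
    rw [← smul_mul_assoc, ← mul_smul_comm, ← diagonal_smul]
    simp only [Pi.smul_def, Complex.real_smul, Complex.ofReal_mul]
  have hsd : ∀ i, s * 1 ≤ d i := by
    rwa [hsmul, conj_le_conj_iff hT, diagonal_ofReal_le_iff] at hsA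
  have hdt : ∀ i, d i ≤ t * 1 := by
    rwa [hsmul, conj_le_conj_iff hT, diagonal_ofReal_le_iff] at htA
  simp only [mul_one] at hsd hdt
  have hd i : 0 < d i := hs.trans_le (hsd i)
  rw [amean_conj, hmean_conj hT, amean_diagonal_ofReal,
    hmean_diagonal_ofReal (fun _ ↦ one_pos) hd, hsmul, conj_le_conj_iff hT,
    diagonal_ofReal_le_iff]
  exact fun i ↦ inv_mul_one_add_div_two_le (hd i)
    (sq_one_add_le_of_mem_Icc hsK htK (hsd i) (hdt i))

end HarmonicMean

section Inequality

variable {n : Type} [Fintype n] [DecidableEq n]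

lemma OpAntitone.cfc_hmean_le {g : ℝ → ℝ} (hg : OpAntitone g) {A B : Matrix n n ℂ}
    (hA : A.PosDef) (hB : B.PosDef) {K : ℝ} (hK : 1 ≤ K) (hAB : K⁻¹ • amean A B ≤ hmean A B) :
    cfc g (hmean A B) ≤ K • amean (cfc g A) (cfc g B) := by
  have hK0 : 0 < K := by linarith
  have hamean : (K⁻¹ • amean A B).PosDef :=
    ((hA.add hB).smul (by positivity)).smul (inv_pos.2 hK0)
  have hhmean : (hmean A B).PosDef := ((hA.inv.add hB.inv).smul (by positivity)).inv
  calc cfc g (hmean A B)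
      ≤ cfc g (K⁻¹ • amean A B) := hg.loewnerAntitone n hamean hhmean hAB
    _ ≤ K • cfc g (K • K⁻¹ • amean A B) := hg.cfc_le_smul_cfc_smul hamean hK
    _ = K • cfc g (amean A B) := by rw [smul_inv_smul₀ hK0.ne']
    _ ≤ K • amean (cfc g A) (cfc g B) := by
      have := hg.convexOn_cfc.2 hA hB (inv_nonneg.2 zero_le_two) (inv_nonneg.2 zero_le_two)
        (by norm_num : (2 : ℝ)⁻¹ + 2⁻¹ = 1)
      rw [← smul_add, ← smul_add] at this
      exact smul_le_smul_of_nonneg_left this hK0.le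

lemma one_le_of_sq_one_add_le {s K : ℝ} (hs : 0 < s) (h : (1 + s) ^ 2 ≤ 4 * K * s) : 1 ≤ K := by
  nlinarith [sq_nonneg (1 - s)]

lemma sq_one_add_le_of_one_le_mul {s t : ℝ} (hs : 0 < s) (hst : 1 ≤ s * t) :
    (1 + s) ^ 2 ≤ 4 * ((√s + √t) / 2) ^ 2 * s := by
  have hsqrt : 1 ≤ √s * √t := by rwa [← Real.sqrt_mul hs.le, Real.one_le_sqrt]
  calc (1 + s) ^ 2 ≤ (√s * (√s + √t)) ^ 2 := by
        gcongr
        linarith [Real.mul_self_sqrt hs.le]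
    _ = 4 * ((√s + √t) / 2) ^ 2 * s := by
        linear_combination (√s + √t) ^ 2 * Real.sq_sqrt hs.le

theorem polya_szego_antitone_st_ge_one_general {n m : Type} [Fintype n] [DecidableEq n]
    [Fintype m] (Φ : Matrix n n ℂ →ₗ[ℂ] Matrix m m ℂ)
    (hΦ : ∀ X : Matrix n n ℂ, X.PosSemidef → (Φ X).PosSemidef)
    {g : ℝ → ℝ} (hg : OpAntitone g) {A B : Matrix n n ℂ} (hA : A.PosDef) (hB : B.PosDef)
    {s t K : ℝ} (hs : 0 < s) (hsK : (1 + s) ^ 2 ≤ 4 * K * s) (htK : (1 + t) ^ 2 ≤ 4 * K * t)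
    (hsA : LoewnerLE (s • A) B) (htA : LoewnerLE B (t • A)) :
    LoewnerLE (Φ (cfc g (hmean A B))) (K • ((2 : ℝ)⁻¹ • (Φ (cfc g A) + Φ (cfc g B)))) := by
  have hmeans := inv_smul_amean_le_hmean hA hB.isHermitian hs hsK htK hsA htA
  have hcfc := hg.cfc_hmean_le hA hB (one_le_of_sq_one_add_le hs hsK) hmeans
  simpa only [LoewnerLE, amean, map_sub, map_add, LinearMap.map_smul_of_tower] using hΦ _ hcfc

end Inequality

end PolyaSzego

theorem polya_szego_antitone_st_ge_one {n m : Type} [Fintype n] [DecidableEq n] [Fintype m] [DecidableEq m]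
    (Φ : Matrix n n ℂ →ₗ[ℂ] Matrix m m ℂ)
    (hΦ : ∀ X : Matrix n n ℂ, X.PosSemidef → (Φ X).PosSemidef)
    (g : ℝ → ℝ) (hg : OpAntitone g)
    (A B : Matrix n n ℂ) (hA : A.PosDef) (hB : B.PosDef)
    (s t : ℝ) (hs : 0 < s) (hst : s ≤ t) (h1 : 1 ≤ s * t)
    (hsA : LoewnerLE (s • A) B) (htA : LoewnerLE B (t • A)) :
    LoewnerLE (Φ (cfc g (hmean A B)))
      ((((Real.sqrt s + Real.sqrt t) / 2) ^ 2) • ((2 : ℝ)⁻¹ • (Φ (cfc g A) + Φ (cfc g B)))) := by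
  refine polya_szego_antitone_st_ge_one_general Φ hΦ hg hA hB hs
    (sq_one_add_le_of_one_le_mul hs h1) ?_ hsA htA
  rw [add_comm √s]
  exact sq_one_add_le_of_one_le_mul (hs.trans_le hst) (by rwa [mul_comm])
end
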